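/- Let d ∈ ℕ, q ∈ (1,∞), and s ∈ Int(S_d). Define R(z) = √(2π) e^{−z} z^{z+1/2} / Γ(z+1) for z > 0, and S_{b,q}(s) = [R^q((1−‖s‖₁)/b) ∏_{i=1}^d R^q(s_i/b)] / [R(q(1−‖s‖₁)/b) ∏_{i=1}^d R(q s_i/b)] × R(q/b + d) / R^q(1/b + d). Then, as b → 0, S_{b,q}(s) = 1 + O_s(b). -/

import Mathlib

open MeasureTheory Filter Asymptotics Real Topology

noncomputable section

/-- The `d`-dimensional simplex `S_d = {s ∈ [0,1]^d : ‖s‖₁ ≤ 1}`. -/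
def Sd (d : ℕ) : Set (Fin d → ℝ) :=
  {s | (∀ i, s i ∈ Set.Icc (0 : ℝ) 1) ∧ ∑ i, |s i| ≤ 1}

/-- The interior of the simplex, `Int(S_d) = {s ∈ (0,1)^d : ‖s‖₁ < 1}`. -/
def SdInt (d : ℕ) : Set (Fin d → ℝ) :=
  {s | (∀ i, s i ∈ Set.Ioo (0 : ℝ) 1) ∧ ∑ i, |s i| < 1}

/-- The Dirichlet(u, v) density on the simplex, evaluated at `x`. -/
def dirK (d : ℕ) (u : Fin d → ℝ) (v : ℝ) (x : Fin d → ℝ) : ℝ :=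
  (Real.Gamma (∑ i, u i + v) / (Real.Gamma v * ∏ i, Real.Gamma (u i))) *
    (1 - ∑ i, x i) ^ (v - 1) * ∏ i, (x i) ^ (u i - 1)

/-- The Dirichlet kernel `κ_{s,b} = K_{s/b+1, (1-‖s‖₁)/b+1}`. -/
def kappa (d : ℕ) (s : Fin d → ℝ) (b : ℝ) (x : Fin d → ℝ) : ℝ :=
  dirK d (fun i => s i / b + 1) ((1 - ∑ i, s i) / b + 1) x

/-- `ψ(s) = (4π)^{-d/2} / ((1-‖s‖₁)^{1/2} ∏ s_i^{1/2})`. -/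
def psiFun (d : ℕ) (s : Fin d → ℝ) : ℝ :=
  (4 * π) ^ (-(d : ℝ) / 2) /
    ((1 - ∑ i, s i) ^ ((1 : ℝ) / 2) * ∏ i, (s i) ^ ((1 : ℝ) / 2))

/-- The Dirichlet kernel density estimator `f̂_{n,b}(s)`. -/
def fhat {Ω : Type*} (d n : ℕ) (b : ℝ) (X : ℕ → Ω → (Fin d → ℝ))
    (s : Fin d → ℝ) (ω : Ω) : ℝ :=
  (n : ℝ)⁻¹ * ∑ i ∈ Finset.Icc 1 n, kappa d s b (X i ω)

/-- The strong mixing (α-mixing) coefficient of the sequence `X`. -/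
def alphaMix {Ω : Type*} [MeasurableSpace Ω] (P : Measure Ω)
    {d : ℕ} (X : ℕ → Ω → (Fin d → ℝ)) (m : ℕ) : ℝ :=
  sSup {r : ℝ | ∃ k : ℕ, 1 ≤ k ∧ ∃ A B : Set Ω,
    MeasurableSet[⨆ i ∈ Set.Icc 1 k, MeasurableSpace.comap (X i) inferInstance] A ∧
    MeasurableSet[⨆ i ∈ Set.Ici (k + m), MeasurableSpace.comap (X i) inferInstance] B ∧
    r = |(P (A ∩ B)).toReal - (P A).toReal * (P B).toReal|}

/-- Strict stationarity of the sequence `X` (indexed from 1). -/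
def IsStrictlyStationary {Ω : Type*} [MeasurableSpace Ω] (P : Measure Ω)
    {d : ℕ} (X : ℕ → Ω → (Fin d → ℝ)) : Prop :=
  ∀ k n : ℕ,
    Measure.map (fun ω => fun t : Fin n => X (t.1 + 1 + k) ω) P =
      Measure.map (fun ω => fun t : Fin n => X (t.1 + 1) ω) P

/-- Covariance of two real random variables. -/
def cov {Ω : Type*} [MeasurableSpace Ω] (P : Measure Ω) (Y Z : Ω → ℝ) : ℝ :=
  ∫ ω, Y ω * Z ω ∂P - (∫ ω, Y ω ∂P) * (∫ ω, Z ω ∂P)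

/-- The bias functional `g(s)` from Theorem MSE. -/
def gfun (d : ℕ) (f : (Fin d → ℝ) → ℝ) (s : Fin d → ℝ) : ℝ :=
  (∑ i, (1 - ((d : ℝ) + 1) * s i) * fderiv ℝ f s (Pi.single i 1)) +
    (1 / 2) * ∑ i, ∑ j, s i * ((if i = j then (1 : ℝ) else 0) - s j) *
      fderiv ℝ (fun t => fderiv ℝ f t (Pi.single i 1)) s (Pi.single j 1)

/-- The centered kernel variable `Ξ_{i,n}(s)`. -/
def Xi {Ω : Type*} [MeasurableSpace Ω] (P : Measure Ω) {d : ℕ}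
    (X : ℕ → Ω → (Fin d → ℝ)) (s : Fin d → ℝ) (b : ℝ) (i : ℕ) (ω : Ω) : ℝ :=
  kappa d s b (X i ω) - ∫ ω', kappa d s b (X i ω') ∂P

/-- The `j`-th big block of indices `I_j`. -/
def bigBlock (pn qn j : ℕ) : Finset ℕ :=
  Finset.Icc ((j - 1) * (pn + qn) + 1) ((j - 1) * (pn + qn) + pn)

/-- The `j`-th small block of indices `J_j`. -/
def smallBlock (pn qn j : ℕ) : Finset ℕ :=
  Finset.Icc ((j - 1) * (pn + qn) + pn + 1) (j * (pn + qn))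

/-- Assumption (A2): pairwise joint densities exist and the local dependence
functions `h_{i,j} = f_{X_i,X_j} - f_{X_i} f_{X_j}` have uniformly bounded `L^p` norms. -/
def AssumpA2 {Ω : Type*} [MeasurableSpace Ω] (P : Measure Ω) {d : ℕ}
    (X : ℕ → Ω → (Fin d → ℝ)) (f : (Fin d → ℝ) → ℝ) (p : ℝ) : Prop :=
  ∃ fpair : ℕ → ℕ → ((Fin d → ℝ) × (Fin d → ℝ)) → ℝ,
    (∀ i j : ℕ, 1 ≤ i → 1 ≤ j → i ≠ j →
      Measure.map (fun ω => (X i ω, X j ω)) P =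
        volume.withDensity (fun z => ENNReal.ofReal (fpair i j z))) ∧
    (∀ i j : ℕ, 1 ≤ i → 1 ≤ j → i ≠ j →
      Integrable (fun z => |fpair i j z - f z.1 * f z.2| ^ p)
        (volume.restrict (Sd d ×ˢ Sd d))) ∧
    ∃ C : ℝ, ∀ i j : ℕ, 1 ≤ i → 1 ≤ j → i ≠ j →
      (∫ z in Sd d ×ˢ Sd d, |fpair i j z - f z.1 * f z.2| ^ p) ^ (1 / p) ≤ C

/-- Stirling ratio `R(z) = √(2π) e^{-z} z^{z+1/2} / Γ(z+1)`. -/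
def Rfun (z : ℝ) : ℝ :=
  Real.sqrt (2 * π) * Real.exp (-z) * z ^ (z + 1 / 2) / Real.Gamma (z + 1)

end

/-!
Put `L = log ∘ Rfun`. Every factor of the product is `exp (O(b))` as soon as `L z = O(1 / z)` at
infinity, and such factors are stable under products, quotients and powers.

The Gamma function drops out of the increment `L (z + 1) - L z = (z + 1 / 2) log (1 + 1 / z) - 1`,
which lies between `0` and `(1 / z - 1 / (z + 1)) / 4`. Hence `L (z + n)` increases with `n` while
`L (z + n) + 1 / (4 (z + n))` decreases. Both tend to `0`, by Stirling's formula for factorials and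
Euler's limit formula for `Γ`, and comparing with `n = 0` gives `-1 / (4 z) ≤ L z ≤ 0`.
-/

/-- `IsExpBigO l f g` is the multiplicative error estimate `f = exp (O(g))` along `l`. Positivity of
`f` is part of the definition since `Real.log` does not see the sign of its argument. -/
structure IsExpBigO {α : Type*} (l : Filter α) (f g : α → ℝ) : Prop where
  eventually_pos : ∀ᶠ x in l, 0 < f x
  isBigO_log : (fun x => log (f x)) =O[l] g

namespace IsExpBigO

variable {α β ι : Type*} {l : Filter α} {f f₁ f₂ g : α → ℝ}

theorem mul (h₁ : IsExpBigO l f₁ g) (h₂ : IsExpBigO l f₂ g) :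
    IsExpBigO l (fun x => f₁ x * f₂ x) g where
  eventually_pos := by
    filter_upwards [h₁.eventually_pos, h₂.eventually_pos] with x hx₁ hx₂ using mul_pos hx₁ hx₂
  isBigO_log := by
    refine (h₁.isBigO_log.add h₂.isBigO_log).congr' ?_ .rfl
    filter_upwards [h₁.eventually_pos, h₂.eventually_pos] with x hx₁ hx₂
    exact (log_mul hx₁.ne' hx₂.ne').symm

theorem div (h₁ : IsExpBigO l f₁ g) (h₂ : IsExpBigO l f₂ g) :
    IsExpBigO l (fun x => f₁ x / f₂ x) g where
  eventually_pos := by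
    filter_upwards [h₁.eventually_pos, h₂.eventually_pos] with x hx₁ hx₂ using div_pos hx₁ hx₂
  isBigO_log := by
    refine (h₁.isBigO_log.sub h₂.isBigO_log).congr' ?_ .rfl
    filter_upwards [h₁.eventually_pos, h₂.eventually_pos] with x hx₁ hx₂
    exact (log_div hx₁.ne' hx₂.ne').symm

theorem rpow (h : IsExpBigO l f g) (r : ℝ) : IsExpBigO l (fun x => f x ^ r) g where
  eventually_pos := h.eventually_pos.mono fun _ hx => rpow_pos_of_pos hx r
  isBigO_log := (h.isBigO_log.const_mul_left r).congr'
    (h.eventually_pos.mono fun _ hx => (log_rpow hx r).symm) .rfl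

theorem prod {F : ι → α → ℝ} {s : Finset ι} (h : ∀ i ∈ s, IsExpBigO l (F i) g) :
    IsExpBigO l (fun x => ∏ i ∈ s, F i x) g := by
  have hpos : ∀ᶠ x in l, ∀ i ∈ s, 0 < F i x :=
    (Filter.eventually_all_finset s).2 fun i hi => (h i hi).eventually_pos
  refine ⟨hpos.mono fun x hx => Finset.prod_pos hx, ?_⟩
  refine (IsBigO.fun_sum fun i hi => (h i hi).isBigO_log).congr' ?_ .rfl
  exact hpos.mono fun x hx => (log_prod fun i hi => (hx i hi).ne').symm

theorem comp_tendsto (h : IsExpBigO l f g) {k : β → α} {l' : Filter β} (hk : Tendsto k l' l) :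
    IsExpBigO l' (f ∘ k) (g ∘ k) :=
  ⟨hk.eventually h.eventually_pos, h.isBigO_log.comp_tendsto hk⟩

theorem trans_isBigO {g' : α → ℝ} (h : IsExpBigO l f g) (hg : g =O[l] g') : IsExpBigO l f g' :=
  ⟨h.eventually_pos, h.isBigO_log.trans hg⟩

theorem isBigO_sub_one (h : IsExpBigO l f g) (hg : Tendsto g l (𝓝 0)) :
    (fun x => f x - 1) =O[l] g := by
  have hexp : (fun t : ℝ => exp t - 1) =O[𝓝 0] fun t => t := by
    simpa using (hasDerivAt_exp 0).isBigO_sub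
  have hlog : Tendsto (fun x => log (f x)) l (𝓝 0) := h.isBigO_log.trans_tendsto hg
  refine ((hexp.comp_tendsto hlog).trans h.isBigO_log).congr' ?_ .rfl
  exact h.eventually_pos.mono fun x hx => by simp [exp_log hx]

end IsExpBigO

section LogBounds

variable {z : ℝ}

theorem one_le_add_half_mul_log_one_add_inv (hz : 0 < z) :
    1 ≤ (z + 1 / 2) * log (1 + z⁻¹) :=
  calc
    1 = (z + 1 / 2) * (2 * z⁻¹ / (z⁻¹ + 2)) := by field_simp; ring
    _ ≤ (z + 1 / 2) * log (1 + z⁻¹) := by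
      gcongr
      exact le_log_one_add_of_nonneg (by positivity)

theorem log_le_sub_inv_div_two {x : ℝ} (hx : 1 ≤ x) : log x ≤ (x - x⁻¹) / 2 := by
  rw [← sinh_log (zero_lt_one.trans_le hx)]
  exact self_le_sinh_iff.2 (log_nonneg hx)

theorem add_half_mul_log_one_add_inv_le (hz : 0 < z) :
    (z + 1 / 2) * log (1 + z⁻¹) ≤ 1 + (z⁻¹ - (z + 1)⁻¹) / 4 :=
  calc
    (z + 1 / 2) * log (1 + z⁻¹)
    _ ≤ (z + 1 / 2) * ((1 + z⁻¹ - (1 + z⁻¹)⁻¹) / 2) := by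
      gcongr
      exact log_le_sub_inv_div_two (by simp [hz.le])
    _ = 1 + (z⁻¹ - (z + 1)⁻¹) / 4 := by
      have : (1 + z⁻¹)⁻¹ = z / (z + 1) := by field_simp
      rw [this]
      field_simp
      ring

theorem log_one_add_div_eq_sub {x y : ℝ} (hy : 0 < y) (hxy : 0 < x + y) :
    log (1 + x / y) = log (x + y) - log y := by
  rw [← log_div hxy.ne' hy.ne', add_div, div_self hy.ne', add_comm]

end LogBounds

section GammaAsymptotics

variable {x : ℝ}

theorem log_Gamma_add_one (hx : 0 < x) : log (Gamma (x + 1)) = log (Gamma x) + log x := by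
  rw [Gamma_add_one hx.ne', log_mul hx.ne' (Gamma_pos_of_pos hx).ne', add_comm]

theorem logGammaSeq_eq (hx : 0 < x) (n : ℕ) :
    BohrMollerup.logGammaSeq x n =
      x * log n + log (Gamma (n + 1)) + log (Gamma x) - log (Gamma (x + n + 1)) := by
  have hsum := BohrMollerup.f_add_nat_eq (f := log ∘ Gamma) log_Gamma_add_one hx (n + 1)
  simp only [Function.comp_apply, Nat.cast_add_one, ← add_assoc] at hsum
  rw [hsum, BohrMollerup.logGammaSeq, Gamma_nat_eq_factorial]
  ring

theorem tendsto_log_Gamma_add_natCast_sub (hx : 0 < x) :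
    Tendsto (fun n : ℕ => log (Gamma (x + n + 1)) - log (Gamma (n + 1)) - x * log n)
      atTop (𝓝 0) := by
  have h := (BohrMollerup.tendsto_log_gamma hx).const_sub (log (Gamma x))
  rw [sub_self] at h
  refine h.congr fun n => ?_
  rw [logGammaSeq_eq hx]
  ring

theorem tendsto_add_half_mul_log_one_add_div_natCast (x : ℝ) :
    Tendsto (fun n : ℕ => (x + n + 1 / 2) * log (1 + x / n)) atTop (𝓝 x) := by
  have hmul : Tendsto (fun n : ℕ => n * log (1 + x / n)) atTop (𝓝 x) :=
    (tendsto_mul_log_one_add_div_atTop x).comp tendsto_natCast_atTop_atTop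
  have hlog : Tendsto (fun n : ℕ => log (1 + x / n)) atTop (𝓝 0) := by
    simpa using ((tendsto_const_div_atTop_nhds_zero_nat x).const_add 1).log (by norm_num)
  have h := hmul.add (hlog.const_mul (x + 1 / 2))
  rw [mul_zero, add_zero] at h
  exact h.congr fun n => by ring

end GammaAsymptotics

section StirlingRatio

variable {z : ℝ}

theorem Rfun_pos (hz : 0 < z) : 0 < Rfun z := by
  have := Gamma_pos_of_pos (add_pos hz one_pos)
  unfold Rfun
  positivity

theorem log_Rfun (hz : 0 < z) :
    log (Rfun z) = log (2 * π) / 2 - z + (z + 1 / 2) * log z - log (Gamma (z + 1)) := by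
  have hΓ := Gamma_pos_of_pos (add_pos hz one_pos)
  rw [Rfun, log_div (by positivity) hΓ.ne', log_mul (by positivity) (by positivity),
    log_mul (by positivity) (by positivity), log_exp, log_rpow hz, log_sqrt (by positivity)]
  ring

theorem log_Rfun_add_one_sub (hz : 0 < z) :
    log (Rfun (z + 1)) - log (Rfun z) = (z + 1 / 2) * log (1 + z⁻¹) - 1 := by
  have hz' : 0 < z + 1 := by positivity
  rw [log_Rfun hz, log_Rfun hz', log_Gamma_add_one hz', ← one_div,
    log_one_add_div_eq_sub hz (add_comm z 1 ▸ hz'), add_comm 1 z]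
  ring

theorem monotone_log_Rfun_add_natCast (hz : 0 < z) :
    Monotone fun n : ℕ => log (Rfun (z + n)) := by
  refine monotone_nat_of_le_succ fun n => ?_
  have hzn : 0 < z + n := by positivity
  rw [Nat.cast_add_one, ← add_assoc]
  linarith [log_Rfun_add_one_sub hzn, one_le_add_half_mul_log_one_add_inv hzn]

theorem antitone_log_Rfun_add_natCast_add_inv (hz : 0 < z) :
    Antitone fun n : ℕ => log (Rfun (z + n)) + (z + n)⁻¹ / 4 := by
  refine antitone_nat_of_succ_le fun n => ?_
  have hzn : 0 < z + n := by positivity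
  rw [Nat.cast_add_one, ← add_assoc]
  linarith [log_Rfun_add_one_sub hzn, add_half_mul_log_one_add_inv_le hzn]

theorem tendsto_log_Rfun_natCast : Tendsto (fun n : ℕ => log (Rfun n)) atTop (𝓝 0) := by
  have h := (Stirling.tendsto_stirlingSeq_sqrt_pi.log (by positivity)).const_sub (log √π)
  rw [sub_self] at h
  refine h.congr' ?_
  filter_upwards [eventually_gt_atTop 0] with n hn
  have hn' : (0 : ℝ) < n := Nat.cast_pos.2 hn
  rw [log_Rfun hn', Gamma_nat_eq_factorial, Stirling.log_stirlingSeq_formula,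
    log_div hn'.ne' (exp_ne_zero 1), log_exp, log_sqrt pi_pos.le,
    log_mul two_ne_zero hn'.ne', log_mul two_ne_zero pi_ne_zero]
  ring

theorem tendsto_log_Rfun_add_natCast (hz : 0 < z) :
    Tendsto (fun n : ℕ => log (Rfun (z + n))) atTop (𝓝 0) := by
  have h := (tendsto_log_Rfun_natCast.add
    ((tendsto_add_half_mul_log_one_add_div_natCast z).sub_const z)).sub
      (tendsto_log_Gamma_add_natCast_sub hz)
  rw [sub_self, add_zero, sub_zero] at h
  refine h.congr' ?_
  filter_upwards [eventually_gt_atTop 0] with n hn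
  have hn' : (0 : ℝ) < n := Nat.cast_pos.2 hn
  rw [log_Rfun hn', log_Rfun (by positivity), log_one_add_div_eq_sub hn' (by positivity)]
  ring

theorem log_Rfun_nonpos (hz : 0 < z) : log (Rfun z) ≤ 0 := by
  simpa using (monotone_log_Rfun_add_natCast hz).ge_of_tendsto (tendsto_log_Rfun_add_natCast hz) 0

theorem neg_inv_div_four_le_log_Rfun (hz : 0 < z) : -(z⁻¹ / 4) ≤ log (Rfun z) := by
  have hinv : Tendsto (fun n : ℕ => (z + n)⁻¹ / 4) atTop (𝓝 0) := by
    simpa using (tendsto_inv_atTop_zero.comp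
      (tendsto_atTop_add_const_left _ z tendsto_natCast_atTop_atTop)).div_const (4 : ℝ)
  have hlim := (tendsto_log_Rfun_add_natCast hz).add hinv
  have h := (antitone_log_Rfun_add_natCast_add_inv hz).le_of_tendsto hlim 0
  simp only [Nat.cast_zero, add_zero] at h
  linarith

theorem isExpBigO_Rfun : IsExpBigO atTop Rfun (fun z => z⁻¹) := by
  refine ⟨(eventually_gt_atTop 0).mono fun z => Rfun_pos, .of_bound (1 / 4) ?_⟩
  filter_upwards [eventually_gt_atTop 0] with z hz
  rw [norm_eq_abs, abs_of_nonpos (log_Rfun_nonpos hz), norm_of_nonneg (inv_nonneg.2 hz.le)]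
  linarith [neg_inv_div_four_le_log_Rfun hz]

theorem isExpBigO_Rfun_div_add {c : ℝ} (hc : 0 < c) (e : ℝ) :
    IsExpBigO (𝓝[>] 0) (fun b => Rfun (c / b + e)) fun b => b := by
  have hdiv : Tendsto (fun b : ℝ => c / b) (𝓝[>] 0) atTop :=
    tendsto_inv_nhdsGT_zero.const_mul_atTop hc
  have hbdd : Tendsto (fun b : ℝ => (c + e * b)⁻¹) (𝓝[>] 0) (𝓝 c⁻¹) := by
    have hcont : Continuous fun b : ℝ => c + e * b := by fun_prop
    exact ((hcont.tendsto' 0 c (by simp)).inv₀ hc.ne').mono_left nhdsWithin_le_nhds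
  have hinv : (fun b : ℝ => (c / b + e)⁻¹) =O[𝓝[>] 0] fun b => b := by
    refine ((isBigO_refl (fun b : ℝ => b) _).mul (hbdd.isBigO_one ℝ)).congr' ?_ (by simp)
    filter_upwards [self_mem_nhdsWithin] with b (hb : 0 < b)
    rw [div_add' _ _ _ hb.ne', inv_div, div_eq_mul_inv]
  exact (isExpBigO_Rfun.comp_tendsto (tendsto_atTop_add_const_right _ e hdiv)).trans_isBigO hinv

theorem isExpBigO_Rfun_div {c : ℝ} (hc : 0 < c) :
    IsExpBigO (𝓝[>] 0) (fun b => Rfun (c / b)) fun b => b := by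
  simpa using isExpBigO_Rfun_div_add hc 0

end StirlingRatio

theorem one_sub_sum_pos_of_mem_SdInt {d : ℕ} {s : Fin d → ℝ} (hs : s ∈ SdInt d) :
    0 < 1 - ∑ i, s i :=
  sub_pos.2 <| (Finset.sum_le_sum fun i _ => le_abs_self (s i)).trans_lt hs.2

theorem stirling_ratio_product_general {ι : Type*} [Fintype ι] {q a : ℝ} (hq : 0 < q)
    (ha : 0 < a) {s : ι → ℝ} (hs : ∀ i, 0 < s i) (e : ℝ) :
    (fun b : ℝ =>
        (Rfun (a / b) ^ q * ∏ i, Rfun (s i / b) ^ q) /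
            (Rfun (q * a / b) * ∏ i, Rfun (q * s i / b)) *
          (Rfun (q / b + e) / Rfun (1 / b + e) ^ q) - 1)
      =O[𝓝[>] (0 : ℝ)] (fun b => b) := by
  have hnum : IsExpBigO (𝓝[>] 0)
      (fun b => Rfun (a / b) ^ q * ∏ i, Rfun (s i / b) ^ q) fun b => b :=
    ((isExpBigO_Rfun_div ha).rpow q).mul
      (.prod fun i _ => (isExpBigO_Rfun_div (hs i)).rpow q)
  have hden : IsExpBigO (𝓝[>] 0)
      (fun b => Rfun (q * a / b) * ∏ i, Rfun (q * s i / b)) fun b => b :=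
    (isExpBigO_Rfun_div (mul_pos hq ha)).mul
      (.prod fun i _ => isExpBigO_Rfun_div (mul_pos hq (hs i)))
  have hshift : IsExpBigO (𝓝[>] 0)
      (fun b => Rfun (q / b + e) / Rfun (1 / b + e) ^ q) fun b => b :=
    (isExpBigO_Rfun_div_add hq e).div ((isExpBigO_Rfun_div_add one_pos e).rpow q)
  exact ((hnum.div hden).mul hshift).isBigO_sub_one (tendsto_id.mono_left nhdsWithin_le_nhds)

/-- Stirling-ratio product `S_{b,q}(s) = 1 + O_s(b)`. -/
theorem stirling_ratio_product (d : ℕ) (hd : 1 ≤ d) (q : ℝ) (hq : 1 < q)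
    (s : Fin d → ℝ) (hs : s ∈ SdInt d) :
    (fun b : ℝ =>
        (Rfun ((1 - ∑ i, s i) / b) ^ q * ∏ i, Rfun (s i / b) ^ q) /
            (Rfun (q * (1 - ∑ i, s i) / b) * ∏ i, Rfun (q * s i / b)) *
          (Rfun (q / b + d) / Rfun (1 / b + d) ^ q) - 1)
      =O[𝓝[>] (0 : ℝ)] (fun b => b) :=
  stirling_ratio_product_general (zero_lt_one.trans hq) (one_sub_sum_pos_of_mem_SdInt hs)
    (fun i => (hs.1 i).1) d
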